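/- (Characterization of maximal ST-pairs of M_{n,n}) Let n ≥ 3 and let (S, T) be a maximal ST-pair of M_{n,n}. Then (S, T) has one of the following five forms: (1) T-chain: T is a chain contained in M_{n,n}* and S = M_{n,n}* ∖ T (explicitly, T is one of {aᵢ}, {bᵢ}, {aᵢ, b₁}, {aₙ, bᵢ}); (2) S-link: S = {b₁} and T = {a₁,…,aₙ, bᵢ} for some i ≠ 1, or S = {aₙ} and T = {aᵢ, b₁,…,bₙ} for some i ≠ n; (3) S-2-links: S = {aₙ, b₁} and T = {aᵢ, bⱼ} with i ≠ n and j ≠ 1; (4) S-level: S = {b₁,…,bₙ} and T = {aᵢ, aₙ} with i ≠ n, or S = {a₁,…,aₙ} and T = {b₁, bᵢ} with i ≠ 1; (5) S-level-minus-link: S = {b₂,…,bₙ} and T = {aᵢ, aₙ, b₁} with i ≠ n, or S = {a₁,…,a_{n−1}} and T = {aₙ, b₁, bᵢ} with i ≠ 1. -/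

import Mathlib

set_option linter.unreachableTactic false
set_option linter.unusedTactic false
set_option linter.unnecessarySeqFocus false

/-- The underlying set of the lattice `M_{n,n}`: a bottom element `0`, a top
element `1`, and two levels `a₁, …, aₙ` and `b₁, …, bₙ`.  Here `a i` (for
`i : Fin n`) stands for `a_{i+1}` and `b j` for `b_{j+1}`, so the link elements
are `aₙ = a ⟨n-1, _⟩` and `b₁ = b ⟨0, _⟩`. -/
inductive Mnn (n : ℕ) : Type where
  | bot : Mnn n
  | top : Mnn n
  | a : Fin n → Mnn n
  | b : Fin n → Mnn n
deriving DecidableEq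

namespace Mnn

/-- The order of `M_{n,n}`: `0` is least, `1` is greatest, `aᵢ ≤ b₁` for every
`i`, `aₙ ≤ bⱼ` for every `j`, and there are no other comparabilities besides
those forced by reflexivity. -/
def le {n : ℕ} : Mnn n → Mnn n → Prop
  | .bot, _ => True
  | .top, .top => True
  | .top, .bot => False
  | .top, .a _ => False
  | .top, .b _ => False
  | .a _, .top => True
  | .a _, .bot => False
  | .a i, .a j => i = j
  | .a i, .b j => (j : ℕ) = 0 ∨ (i : ℕ) = n - 1
  | .b _, .top => True
  | .b _, .bot => False
  | .b _, .a _ => False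
  | .b i, .b j => i = j

/-- The join operation of `M_{n,n}`. -/
def sup {n : ℕ} : Mnn n → Mnn n → Mnn n
  | .bot, x => x
  | .top, _ => .top
  | .a i, .bot => .a i
  | .a _, .top => .top
  | .a i, .a j => if i = j then .a i else .b ⟨0, Nat.lt_of_le_of_lt (Nat.zero_le _) i.isLt⟩
  | .a i, .b j => if (j : ℕ) = 0 ∨ (i : ℕ) = n - 1 then .b j else .top
  | .b i, .bot => .b i
  | .b _, .top => .top
  | .b i, .a j => if (i : ℕ) = 0 ∨ (j : ℕ) = n - 1 then .b i else .top
  | .b i, .b j => if i = j then .b i else .top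

/-- The meet operation of `M_{n,n}`. -/
def inf {n : ℕ} : Mnn n → Mnn n → Mnn n
  | .bot, _ => .bot
  | .top, x => x
  | .a _, .bot => .bot
  | .a i, .top => .a i
  | .a i, .a j => if i = j then .a i else .bot
  | .a i, .b j => if (j : ℕ) = 0 ∨ (i : ℕ) = n - 1 then .a i else .bot
  | .b _, .bot => .bot
  | .b i, .top => .b i
  | .b i, .a j => if (i : ℕ) = 0 ∨ (j : ℕ) = n - 1 then .a j else .bot
  | .b i, .b j => if i = j then .b i
      else .a ⟨n - 1, Nat.sub_lt (Nat.lt_of_le_of_lt (Nat.zero_le _) i.isLt) Nat.one_pos⟩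

theorem le_refl' {n : ℕ} (x : Mnn n) : le x x := by cases x <;> simp [le]

theorem le_trans' {n : ℕ} (x y z : Mnn n) (hxy : le x y) (hyz : le y z) : le x z := by
  cases x <;> cases y <;> cases z <;> simp_all [le] <;> omega

theorem le_antisymm' {n : ℕ} (x y : Mnn n) (hxy : le x y) (hyx : le y x) : x = y := by
  cases x <;> cases y <;> simp_all [le]

theorem le_sup_left' {n : ℕ} (x y : Mnn n) : le x (sup x y) := by
  cases x <;> cases y <;> dsimp only [sup] <;> (try split_ifs) <;> simp_all [le]

theorem le_sup_right' {n : ℕ} (x y : Mnn n) : le y (sup x y) := by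
  cases x <;> cases y <;> dsimp only [sup] <;> (try split_ifs) <;> simp_all [le]

theorem sup_le' {n : ℕ} (x y z : Mnn n) (hxz : le x z) (hyz : le y z) :
    le (sup x y) z := by
  cases x <;> cases y <;> cases z <;> dsimp only [sup] <;> (try split_ifs) <;>
    simp_all [le, Fin.ext_iff] <;> omega

theorem inf_le_left' {n : ℕ} (x y : Mnn n) : le (inf x y) x := by
  cases x <;> cases y <;> dsimp only [inf] <;> (try split_ifs) <;> simp_all [le]

theorem inf_le_right' {n : ℕ} (x y : Mnn n) : le (inf x y) y := by
  cases x <;> cases y <;> dsimp only [inf] <;> (try split_ifs) <;> simp_all [le]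

theorem le_inf' {n : ℕ} (x y z : Mnn n) (hxy : le x y) (hxz : le x z) :
    le x (inf y z) := by
  cases x <;> cases y <;> cases z <;> dsimp only [inf] <;> (try split_ifs) <;>
    simp_all [le, Fin.ext_iff] <;> omega

/-- `M_{n,n}` is a lattice. -/
instance instLattice (n : ℕ) : Lattice (Mnn n) where
  le := le
  sup := sup
  inf := inf
  le_refl := le_refl'
  le_trans := le_trans'
  le_antisymm := le_antisymm'
  le_sup_left := le_sup_left'
  le_sup_right := le_sup_right'
  sup_le := sup_le'
  inf_le_left := inf_le_left'
  inf_le_right := inf_le_right'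
  le_inf := le_inf'

/-- `M_{n,n}* = M_{n,n} ∖ {0, 1}`, the set of non-identity elements. -/
def star (n : ℕ) : Set (Mnn n) := {x | x ≠ .bot ∧ x ≠ .top}

/-- The level `{a₁, …, aₙ}` of `M_{n,n}`. -/
def aLevel (n : ℕ) : Set (Mnn n) := Set.range Mnn.a

/-- The level `{b₁, …, bₙ}` of `M_{n,n}`. -/
def bLevel (n : ℕ) : Set (Mnn n) := Set.range Mnn.b

/-- The link element `aₙ` of the level `{a₁, …, aₙ}`. -/
def aLink (n : ℕ) (h : 0 < n) : Mnn n := .a ⟨n - 1, Nat.sub_lt h Nat.one_pos⟩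

/-- The link element `b₁` of the level `{b₁, …, bₙ}`. -/
def bLink (n : ℕ) (h : 0 < n) : Mnn n := .b ⟨0, h⟩

end Mnn

/-- `L` is `ST`-meet distributive. -/
def IsSTMeetDistrib {α : Type*} [Lattice α] (S T : Set α) : Prop :=
  ∀ s ∈ S, ∀ t₁ ∈ T, ∀ t₂ ∈ T, s ⊓ (t₁ ⊔ t₂) = (s ⊓ t₁) ⊔ (s ⊓ t₂)

/-- `L` is `ST`-join distributive. -/
def IsSTJoinDistrib {α : Type*} [Lattice α] (S T : Set α) : Prop :=
  ∀ s ∈ S, ∀ t₁ ∈ T, ∀ t₂ ∈ T, s ⊔ (t₁ ⊓ t₂) = (s ⊔ t₁) ⊓ (s ⊔ t₂)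

/-- `L` is `ST`-distributive. -/
def IsSTDistrib {α : Type*} [Lattice α] (S T : Set α) : Prop :=
  IsSTMeetDistrib S T ∧ IsSTJoinDistrib S T

/-- `(S, T)` is a maximal `ST`-pair of `M_{n,n}` (subject to the conditions of
the search problem: `S, T ⊆ M_{n,n}*`, `S ∩ T = ∅`, `S ≠ ∅`, `T ≠ ∅`). -/
def MaximalSTPair (n : ℕ) (S T : Set (Mnn n)) : Prop :=
  S ⊆ Mnn.star n ∧ T ⊆ Mnn.star n ∧ S ∩ T = ∅ ∧ S.Nonempty ∧ T.Nonempty ∧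
  IsSTDistrib S T ∧
  (¬ ∃ S' : Set (Mnn n), S ⊂ S' ∧ S' ⊆ Mnn.star n ∧ S' ∩ T = ∅ ∧ IsSTDistrib S' T) ∧
  (¬ ∃ T' : Set (Mnn n), T ⊂ T' ∧ T' ⊆ Mnn.star n ∧ S ∩ T' = ∅ ∧ IsSTDistrib S T')

/-- Type 1 (T-chain): `T` is a chain contained in `M_{n,n}*` — explicitly one
of `{aᵢ}`, `{bᵢ}`, `{aᵢ, b₁}`, `{aₙ, bᵢ}` — and `S = M_{n,n}* ∖ T`. -/
def TypeTChain (n : ℕ) (h : 0 < n) (S T : Set (Mnn n)) : Prop :=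
  IsChain (· ≤ ·) T ∧ S = Mnn.star n \ T ∧
  ∃ i : Fin n, T = {Mnn.a i} ∨ T = {Mnn.b i} ∨
    T = {Mnn.a i, Mnn.bLink n h} ∨ T = {Mnn.aLink n h, Mnn.b i}

/-- Type 2 (S-link): `S = {b₁}` and `T = {a₁, …, aₙ, bᵢ}` with `i ≠ 1`, or
`S = {aₙ}` and `T = {aᵢ, b₁, …, bₙ}` with `i ≠ n`. -/
def TypeSLink (n : ℕ) (h : 0 < n) (S T : Set (Mnn n)) : Prop :=
  (∃ i : Fin n, Mnn.b i ≠ Mnn.bLink n h ∧ S = {Mnn.bLink n h} ∧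
    T = Mnn.aLevel n ∪ {Mnn.b i}) ∨
  (∃ i : Fin n, Mnn.a i ≠ Mnn.aLink n h ∧ S = {Mnn.aLink n h} ∧
    T = {Mnn.a i} ∪ Mnn.bLevel n)

/-- Type 3 (S-2-links): `S = {aₙ, b₁}` and `T = {aᵢ, bⱼ}` with `i ≠ n`,
`j ≠ 1`. -/
def TypeS2Links (n : ℕ) (h : 0 < n) (S T : Set (Mnn n)) : Prop :=
  ∃ i j : Fin n, Mnn.a i ≠ Mnn.aLink n h ∧ Mnn.b j ≠ Mnn.bLink n h ∧
    S = {Mnn.aLink n h, Mnn.bLink n h} ∧ T = {Mnn.a i, Mnn.b j}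

/-- Type 4 (S-level): `S = {b₁, …, bₙ}` and `T = {aᵢ, aₙ}` with `i ≠ n`, or
`S = {a₁, …, aₙ}` and `T = {b₁, bᵢ}` with `i ≠ 1`. -/
def TypeSLevel (n : ℕ) (h : 0 < n) (S T : Set (Mnn n)) : Prop :=
  (∃ i : Fin n, Mnn.a i ≠ Mnn.aLink n h ∧ S = Mnn.bLevel n ∧
    T = {Mnn.a i, Mnn.aLink n h}) ∨
  (∃ i : Fin n, Mnn.b i ≠ Mnn.bLink n h ∧ S = Mnn.aLevel n ∧
    T = {Mnn.bLink n h, Mnn.b i})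

/-- Type 5 (S-level-minus-link): `S = {b₂, …, bₙ}` and `T = {aᵢ, aₙ, b₁}` with
`i ≠ n`, or `S = {a₁, …, a_{n-1}}` and `T = {aₙ, b₁, bᵢ}` with `i ≠ 1`. -/
def TypeSLevelMinusLink (n : ℕ) (h : 0 < n) (S T : Set (Mnn n)) : Prop :=
  (∃ i : Fin n, Mnn.a i ≠ Mnn.aLink n h ∧ S = Mnn.bLevel n \ {Mnn.bLink n h} ∧
    T = {Mnn.a i, Mnn.aLink n h, Mnn.bLink n h}) ∨
  (∃ i : Fin n, Mnn.b i ≠ Mnn.bLink n h ∧ S = Mnn.aLevel n \ {Mnn.aLink n h} ∧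
    T = {Mnn.aLink n h, Mnn.bLink n h, Mnn.b i})

namespace Mnn

variable {n : ℕ}

/-- The two distributive laws for the triple `s`, `t₁`, `t₂`. -/
def DistribAt (s t₁ t₂ : Mnn n) : Prop :=
  s ⊓ (t₁ ⊔ t₂) = (s ⊓ t₁) ⊔ (s ⊓ t₂) ∧ s ⊔ (t₁ ⊓ t₂) = (s ⊔ t₁) ⊓ (s ⊔ t₂)

theorem DistribAt.symm {s t₁ t₂ : Mnn n} (h : DistribAt s t₁ t₂) : DistribAt s t₂ t₁ := by
  unfold DistribAt at *
  rwa [sup_comm t₂, inf_comm t₂, sup_comm (s ⊓ t₂), inf_comm (s ⊔ t₂)]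

theorem distribAt_self (s t : Mnn n) : DistribAt s t t := by
  simp [DistribAt]

theorem distribAt_of_le {s t₁ t₂ : Mnn n} (h : t₁ ≤ t₂) : DistribAt s t₁ t₂ := by
  constructor
  · rw [sup_eq_right.2 h, sup_eq_right.2 (inf_le_inf_left s h)]
  · rw [inf_eq_left.2 h, inf_eq_left.2 (sup_le_sup_left h s)]

theorem distribAt_a_a_a {i j k : Fin n} (hj : i ≠ j) (hk : i ≠ k) :
    DistribAt (a i) (a j) (a k) ↔ j = k := by
  change (inf _ (sup _ _) = sup (inf _ _) (inf _ _) ∧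
    sup _ (inf _ _) = inf (sup _ _) (sup _ _)) ↔ _
  by_cases j = k <;> simp_all [sup, inf]

theorem distribAt_b_b_b {i j k : Fin n} (hj : i ≠ j) (hk : i ≠ k) :
    DistribAt (b i) (b j) (b k) ↔ j = k := by
  change (inf _ (sup _ _) = sup (inf _ _) (inf _ _) ∧
    sup _ (inf _ _) = inf (sup _ _) (sup _ _)) ↔ _
  by_cases j = k <;> simp_all [sup, inf]

theorem distribAt_a_a_b {i j k : Fin n} (hj : i ≠ j) :
    DistribAt (a i) (a j) (b k) ↔ (k : ℕ) = 0 ∨ (j : ℕ) = n - 1 ∨ (i : ℕ) = n - 1 := by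
  change (inf _ (sup _ _) = sup (inf _ _) (inf _ _) ∧
    sup _ (inf _ _) = inf (sup _ _) (sup _ _)) ↔ _
  by_cases (k : ℕ) = 0 <;> by_cases (j : ℕ) = n - 1 <;> by_cases (i : ℕ) = n - 1 <;>
    simp_all [sup, inf, Fin.ext_iff] <;> grind

theorem distribAt_b_a_b {i j k : Fin n} (hk : i ≠ k) :
    DistribAt (b i) (a j) (b k) ↔ (k : ℕ) = 0 ∨ (j : ℕ) = n - 1 ∨ (i : ℕ) = 0 := by
  change (inf _ (sup _ _) = sup (inf _ _) (inf _ _) ∧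
    sup _ (inf _ _) = inf (sup _ _) (sup _ _)) ↔ _
  by_cases (k : ℕ) = 0 <;> by_cases (j : ℕ) = n - 1 <;> by_cases (i : ℕ) = 0 <;>
    simp_all [sup, inf, Fin.ext_iff] <;> grind

theorem distribAt_a_b_b {i j k : Fin n} :
    DistribAt (a i) (b j) (b k) ↔
      j = k ∨ (i : ℕ) = n - 1 ∨ (j : ℕ) = 0 ∨ (k : ℕ) = 0 := by
  change (inf _ (sup _ _) = sup (inf _ _) (inf _ _) ∧
    sup _ (inf _ _) = inf (sup _ _) (sup _ _)) ↔ _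
  by_cases (k : ℕ) = 0 <;> by_cases (j : ℕ) = 0 <;> by_cases (i : ℕ) = n - 1 <;>
    by_cases j = k <;> simp_all [sup, inf, Fin.ext_iff] <;> grind

theorem distribAt_b_a_a {i j k : Fin n} :
    DistribAt (b i) (a j) (a k) ↔
      j = k ∨ (i : ℕ) = 0 ∨ (j : ℕ) = n - 1 ∨ (k : ℕ) = n - 1 := by
  change (inf _ (sup _ _) = sup (inf _ _) (inf _ _) ∧
    sup _ (inf _ _) = inf (sup _ _) (sup _ _)) ↔ _
  by_cases (k : ℕ) = n - 1 <;> by_cases (j : ℕ) = n - 1 <;> by_cases (i : ℕ) = 0 <;>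
    by_cases j = k <;> simp_all [sup, inf, Fin.ext_iff] <;> grind

end Mnn

theorem isSTDistrib_iff_distribAt {n : ℕ} {S T : Set (Mnn n)} :
    IsSTDistrib S T ↔ ∀ s ∈ S, ∀ t₁ ∈ T, ∀ t₂ ∈ T, Mnn.DistribAt s t₁ t₂ :=
  ⟨fun h s hs t₁ h₁ t₂ h₂ => ⟨h.1 s hs t₁ h₁ t₂ h₂, h.2 s hs t₁ h₁ t₂ h₂⟩,
    fun h => ⟨fun s hs t₁ h₁ t₂ h₂ => (h s hs t₁ h₁ t₂ h₂).1,
      fun s hs t₁ h₁ t₂ h₂ => (h s hs t₁ h₁ t₂ h₂).2⟩⟩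

namespace Mnn

variable {n : ℕ} {S T : Set (Mnn n)}

theorem a_le_a {i j : Fin n} : a i ≤ a j ↔ i = j := Iff.rfl

theorem b_le_b {i j : Fin n} : b i ≤ b j ↔ i = j := Iff.rfl

theorem a_le_b {i j : Fin n} : a i ≤ b j ↔ (j : ℕ) = 0 ∨ (i : ℕ) = n - 1 := Iff.rfl

theorem not_b_le_a {i j : Fin n} : ¬ b i ≤ a j := id

theorem a_mem_star (i : Fin n) : a i ∈ star n := by simp [star]

theorem b_mem_star (i : Fin n) : b i ∈ star n := by simp [star]

theorem bot_notMem_of_subset_star (hT : T ⊆ star n) : bot ∉ T := fun h => (hT h).1 rfl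

theorem top_notMem_of_subset_star (hT : T ⊆ star n) : top ∉ T := fun h => (hT h).2 rfl

theorem a_eq_aLink_iff {h : 0 < n} {i : Fin n} : a i = aLink n h ↔ (i : ℕ) = n - 1 := by
  simp [aLink, Fin.ext_iff]

theorem b_eq_bLink_iff {h : 0 < n} {i : Fin n} : b i = bLink n h ↔ (i : ℕ) = 0 := by
  simp [bLink, Fin.ext_iff]

theorem exists_not_le_of_not_isChain (h : ¬ IsChain (· ≤ ·) T) :
    (∃ i j, a i ∈ T ∧ a j ∈ T ∧ i ≠ j) ∨ (∃ i j, b i ∈ T ∧ b j ∈ T ∧ i ≠ j) ∨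
      ∃ i j, a i ∈ T ∧ b j ∈ T ∧ (j : ℕ) ≠ 0 ∧ (i : ℕ) ≠ n - 1 := by
  contrapose! h
  obtain ⟨haa, hbb, hab⟩ := h
  rintro (_ | _ | i | i) hx (_ | _ | j | j) hy -
  case a.a => exact .inl (a_le_a.2 (haa i j hx hy))
  case b.b => exact .inl (b_le_b.2 (hbb i j hx hy))
  case a.b => exact .inl (a_le_b.2 (or_iff_not_imp_left.2 (hab i j hx hy)))
  case b.a => exact .inr (a_le_b.2 (or_iff_not_imp_left.2 (hab j i hy hx)))
  all_goals first | exact .inl trivial | exact .inr trivial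

theorem eq_of_isChain (hn : 0 < n) (hT : T ⊆ star n) (hne : T.Nonempty)
    (hc : IsChain (· ≤ ·) T) :
    ∃ i : Fin n, T = {a i} ∨ T = {b i} ∨ T = {a i, bLink n hn} ∨ T = {aLink n hn, b i} := by
  have haa : ∀ i j, a i ∈ T → a j ∈ T → i = j := fun i j hi hj =>
    (hc.total hi hj).elim a_le_a.1 fun h => (a_le_a.1 h).symm
  have hbb : ∀ i j, b i ∈ T → b j ∈ T → i = j := fun i j hi hj =>
    (hc.total hi hj).elim b_le_b.1 fun h => (b_le_b.1 h).symm
  have hab : ∀ i j, a i ∈ T → b j ∈ T → (j : ℕ) = 0 ∨ (i : ℕ) = n - 1 := fun i j hi hj =>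
    (hc.total hi hj).elim a_le_b.1 fun h => (not_b_le_a h).elim
  have h0 := bot_notMem_of_subset_star hT
  have h1 := top_notMem_of_subset_star hT
  by_cases hA : ∃ i, a i ∈ T
  · obtain ⟨i, hi⟩ := hA
    by_cases hB : ∃ j, b j ∈ T
    · obtain ⟨j, hj⟩ := hB
      have hTij : T = {a i, b j} := by
        ext (_ | _ | k | k) <;> simp <;> grind
      rcases hab i j hi hj with h | h
      · exact ⟨i, .inr (.inr (.inl (by rw [hTij, b_eq_bLink_iff.2 h])))⟩
      · exact ⟨j, .inr (.inr (.inr (by rw [hTij, a_eq_aLink_iff.2 h])))⟩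
    · refine ⟨i, .inl ?_⟩
      ext (_ | _ | k | k) <;> simp <;> grind
  · obtain ⟨_ | _ | i | i, hi⟩ := hne
    case b =>
      refine ⟨i, .inr (.inl ?_)⟩
      ext (_ | _ | k | k) <;> simp <;> grind
    all_goals grind

end Mnn

namespace MaximalSTPair

open Mnn

variable {n : ℕ} {S T : Set (Mnn n)}

theorem subset_star_left (h : MaximalSTPair n S T) : S ⊆ star n := h.1

theorem subset_star_right (h : MaximalSTPair n S T) : T ⊆ star n := h.2.1

theorem notMem_right (h : MaximalSTPair n S T) {x : Mnn n} (hx : x ∈ S) : x ∉ T :=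
  fun hT => h.2.2.1.subset ⟨hx, hT⟩

theorem nonempty_left (h : MaximalSTPair n S T) : S.Nonempty := h.2.2.2.1

theorem nonempty_right (h : MaximalSTPair n S T) : T.Nonempty := h.2.2.2.2.1

theorem distribAt (h : MaximalSTPair n S T) {s t₁ t₂ : Mnn n} (hs : s ∈ S) (h₁ : t₁ ∈ T)
    (h₂ : t₂ ∈ T) : DistribAt s t₁ t₂ :=
  isSTDistrib_iff_distribAt.1 h.2.2.2.2.2.1 s hs t₁ h₁ t₂ h₂

theorem mem_left (h : MaximalSTPair n S T) {x : Mnn n} (hx : x ∈ Mnn.star n) (hxT : x ∉ T)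
    (hd : ∀ t₁ ∈ T, ∀ t₂ ∈ T, DistribAt x t₁ t₂) : x ∈ S := by
  by_contra hxS
  refine h.2.2.2.2.2.2.1 ⟨insert x S, Set.ssubset_insert hxS,
    Set.insert_subset hx h.subset_star_left, ?_, isSTDistrib_iff_distribAt.2 ?_⟩
  · rw [Set.insert_inter_of_notMem hxT, h.2.2.1]
  · rintro s (rfl | hs) t₁ h₁ t₂ h₂
    exacts [hd t₁ h₁ t₂ h₂, h.distribAt hs h₁ h₂]

theorem mem_right (h : MaximalSTPair n S T) {x : Mnn n} (hx : x ∈ Mnn.star n) (hxS : x ∉ S)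
    (hd : ∀ s ∈ S, ∀ t ∈ T, DistribAt s x t) : x ∈ T := by
  by_contra hxT
  refine h.2.2.2.2.2.2.2 ⟨insert x T, Set.ssubset_insert hxT,
    Set.insert_subset hx h.subset_star_right, ?_, isSTDistrib_iff_distribAt.2 ?_⟩
  · rw [Set.inter_insert_of_notMem hxS, h.2.2.1]
  · rintro s hs t₁ (rfl | h₁) t₂ (rfl | h₂)
    exacts [distribAt_self _ _, hd s hs t₂ h₂, (hd s hs t₁ h₁).symm, h.distribAt hs h₁ h₂]

theorem typeTChain (h : MaximalSTPair n S T) (hn : 0 < n) (hc : IsChain (· ≤ ·) T) :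
    TypeTChain n hn S T := by
  refine ⟨hc, ?_, eq_of_isChain hn h.subset_star_right h.nonempty_right hc⟩
  refine Set.Subset.antisymm (fun x hx => ⟨h.subset_star_left hx, h.notMem_right hx⟩) ?_
  rintro x ⟨hx, hxT⟩
  refine h.mem_left hx hxT fun t₁ h₁ t₂ h₂ => ?_
  exact (hc.total h₁ h₂).elim distribAt_of_le fun hle => (distribAt_of_le hle).symm

/-- Distributivity of a maximal pair in terms of the indices of the elements involved. -/
theorem index_conditions (h : MaximalSTPair n S T) :
    (∀ i j k, a i ∈ S → a j ∈ T → a k ∈ T → j = k) ∧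
    (∀ i j k, b i ∈ S → b j ∈ T → b k ∈ T → j = k) ∧
    (∀ i j k, a i ∈ S → a j ∈ T → b k ∈ T →
      (k : ℕ) = 0 ∨ (j : ℕ) = n - 1 ∨ (i : ℕ) = n - 1) ∧
    (∀ i j k, b i ∈ S → a j ∈ T → b k ∈ T →
      (k : ℕ) = 0 ∨ (j : ℕ) = n - 1 ∨ (i : ℕ) = 0) ∧
    (∀ i j k, a i ∈ S → b j ∈ T → b k ∈ T →
      j = k ∨ (i : ℕ) = n - 1 ∨ (j : ℕ) = 0 ∨ (k : ℕ) = 0) ∧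
    (∀ i j k, b i ∈ S → a j ∈ T → a k ∈ T →
      j = k ∨ (i : ℕ) = 0 ∨ (j : ℕ) = n - 1 ∨ (k : ℕ) = n - 1) := by
  have hne : ∀ {x y}, x ∈ S → y ∈ T → x ≠ y := fun hx hy hxy => h.notMem_right hx (hxy ▸ hy)
  refine ⟨fun i j k hi hj hk => ?_, fun i j k hi hj hk => ?_, fun i j k hi hj hk => ?_,
    fun i j k hi hj hk => ?_, fun i j k hi hj hk => ?_, fun i j k hi hj hk => ?_⟩
  · exact (distribAt_a_a_a (fun e => hne hi hj (congrArg _ e)) fun e => hne hi hk (congrArg _ e)).1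
      (h.distribAt hi hj hk)
  · exact (distribAt_b_b_b (fun e => hne hi hj (congrArg _ e)) fun e => hne hi hk (congrArg _ e)).1
      (h.distribAt hi hj hk)
  · exact (distribAt_a_a_b fun e => hne hi hj (congrArg _ e)).1 (h.distribAt hi hj hk)
  · exact (distribAt_b_a_b fun e => hne hi hk (congrArg _ e)).1 (h.distribAt hi hj hk)
  · exact distribAt_a_b_b.1 (h.distribAt hi hj hk)
  · exact distribAt_b_a_a.1 (h.distribAt hi hj hk)

theorem a_mem_left (h : MaximalSTPair n S T) {i : Fin n} (hi : a i ∉ T)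
    (haa : ∀ j k, a j ∈ T → a k ∈ T → j = k)
    (hab : ∀ j k, a j ∈ T → b k ∈ T → (k : ℕ) = 0 ∨ (j : ℕ) = n - 1 ∨ (i : ℕ) = n - 1)
    (hbb : ∀ j k, b j ∈ T → b k ∈ T → j = k ∨ (i : ℕ) = n - 1 ∨ (j : ℕ) = 0 ∨ (k : ℕ) = 0) :
    a i ∈ S := by
  have hne : ∀ {j}, a j ∈ T → i ≠ j := fun hj e => hi (e ▸ hj)
  refine h.mem_left (a_mem_star i) hi ?_
  rintro (_ | _ | j | j) hj (_ | _ | k | k) hk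
  case a.a => exact (distribAt_a_a_a (hne hj) (hne hk)).2 (haa j k hj hk)
  case a.b => exact (distribAt_a_a_b (hne hj)).2 (hab j k hj hk)
  case b.a => exact ((distribAt_a_a_b (hne hk)).2 (hab k j hk hj)).symm
  case b.b => exact distribAt_a_b_b.2 (hbb j k hj hk)
  all_goals first
    | exact ((h.subset_star_right hj).1 rfl).elim | exact ((h.subset_star_right hj).2 rfl).elim
    | exact ((h.subset_star_right hk).1 rfl).elim | exact ((h.subset_star_right hk).2 rfl).elim

theorem b_mem_left (h : MaximalSTPair n S T) {i : Fin n} (hi : b i ∉ T)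
    (hbb : ∀ j k, b j ∈ T → b k ∈ T → j = k)
    (hab : ∀ j k, a j ∈ T → b k ∈ T → (k : ℕ) = 0 ∨ (j : ℕ) = n - 1 ∨ (i : ℕ) = 0)
    (haa : ∀ j k, a j ∈ T → a k ∈ T →
      j = k ∨ (i : ℕ) = 0 ∨ (j : ℕ) = n - 1 ∨ (k : ℕ) = n - 1) :
    b i ∈ S := by
  have hne : ∀ {j}, b j ∈ T → i ≠ j := fun hj e => hi (e ▸ hj)
  refine h.mem_left (b_mem_star i) hi ?_
  rintro (_ | _ | j | j) hj (_ | _ | k | k) hk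
  case b.b => exact (distribAt_b_b_b (hne hj) (hne hk)).2 (hbb j k hj hk)
  case a.b => exact (distribAt_b_a_b (hne hk)).2 (hab j k hj hk)
  case b.a => exact ((distribAt_b_a_b (hne hj)).2 (hab k j hk hj)).symm
  case a.a => exact distribAt_b_a_a.2 (haa j k hj hk)
  all_goals first
    | exact ((h.subset_star_right hj).1 rfl).elim | exact ((h.subset_star_right hj).2 rfl).elim
    | exact ((h.subset_star_right hk).1 rfl).elim | exact ((h.subset_star_right hk).2 rfl).elim

theorem of_a_mem_left (h : MaximalSTPair n S T) (hn : 0 < n) (hc : ¬ IsChain (· ≤ ·) T)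
    {i : Fin n} (hi : a i ∈ S) (hin : (i : ℕ) ≠ n - 1) :
    TypeSLevel n hn S T ∨ TypeSLevelMinusLink n hn S T := by
  obtain ⟨haaa, hbbb, haab, hbab, habb, hbaa⟩ := h.index_conditions
  have hS0 := bot_notMem_of_subset_star h.subset_star_left
  have hS1 := top_notMem_of_subset_star h.subset_star_left
  have hT0 := bot_notMem_of_subset_star h.subset_star_right
  have hT1 := top_notMem_of_subset_star h.subset_star_right
  obtain ⟨k, hk, hk0, hlink⟩ : ∃ k, b k ∈ T ∧ (k : ℕ) ≠ 0 ∧ b ⟨0, hn⟩ ∈ T := by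
    rcases exists_not_le_of_not_isChain hc with
      ⟨p, q, hp, hq, hpq⟩ | ⟨p, q, hp, hq, hpq⟩ | ⟨p, q, hp, hq, hq0, hpn⟩
    · exact absurd (haaa i p q hi hp hq) hpq
    · rcases habb i p q hi hp hq with e | e | e | e
      · exact absurd e hpq
      · exact absurd e hin
      · obtain rfl : p = ⟨0, hn⟩ := Fin.ext e
        exact ⟨q, hq, fun e' => hpq (Fin.ext e'.symm), hp⟩
      · obtain rfl : q = ⟨0, hn⟩ := Fin.ext e
        exact ⟨p, hp, fun e' => hpq (Fin.ext e'), hq⟩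
    · exact absurd (haab i p q hi hp hq) (by simp [hq0, hpn, hin])
  have hb : ∀ j, b j ∈ T ↔ (j : ℕ) = 0 ∨ j = k := by
    refine fun j => ⟨fun hj => ?_, ?_⟩
    · have := habb i j k hi hj hk
      tauto
    · rintro (e | rfl)
      exacts [(Fin.ext e : j = ⟨0, hn⟩) ▸ hlink, hk]
  have ha : ∀ j, a j ∈ T → (j : ℕ) = n - 1 := fun j hj => by
    have := haab i j k hi hj hk
    tauto
  have hSb : ∀ j, b j ∉ S := fun j hj => hk0 (congrArg Fin.val (hbbb j _ _ hj hlink hk)).symm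
  have hSa : ∀ j, a j ∉ T → a j ∈ S := fun j hj =>
    h.a_mem_left hj (fun p q => haaa i p q hi) (fun p q hp _ => .inr (.inl (ha p hp)))
      (fun p q hp hq => by have := habb i p q hi hp hq; tauto)
  have hdisj : ∀ j, a j ∈ S → a j ∉ T := fun j => h.notMem_right
  have hkne : b k ≠ bLink n hn := fun e => hk0 (b_eq_bLink_iff.1 e)
  by_cases hl : aLink n hn ∈ T
  · refine .inr (.inr ⟨k, hkne, ?_, ?_⟩)
    · ext (_ | _ | j | j) <;> simp [aLevel, aLink, Fin.ext_iff] at hl ⊢ <;> grind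
    · ext (_ | _ | j | j) <;> simp [aLink, bLink, Fin.ext_iff] at hl ⊢ <;> grind
  · refine .inl (.inr ⟨k, hkne, ?_, ?_⟩)
    · ext (_ | _ | j | j) <;> simp [aLevel, aLink] at hl ⊢ <;> grind
    · ext (_ | _ | j | j) <;> simp [aLink, bLink, Fin.ext_iff] at hl ⊢ <;> grind

theorem of_b_mem_left (h : MaximalSTPair n S T) (hn : 0 < n) (hc : ¬ IsChain (· ≤ ·) T)
    {i : Fin n} (hi : b i ∈ S) (hi0 : (i : ℕ) ≠ 0) :
    TypeSLevel n hn S T ∨ TypeSLevelMinusLink n hn S T := by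
  obtain ⟨haaa, hbbb, haab, hbab, habb, hbaa⟩ := h.index_conditions
  have hS0 := bot_notMem_of_subset_star h.subset_star_left
  have hS1 := top_notMem_of_subset_star h.subset_star_left
  have hT0 := bot_notMem_of_subset_star h.subset_star_right
  have hT1 := top_notMem_of_subset_star h.subset_star_right
  obtain ⟨k, hk, hkn, hlink⟩ : ∃ k, a k ∈ T ∧ (k : ℕ) ≠ n - 1 ∧
      a ⟨n - 1, Nat.sub_lt hn Nat.one_pos⟩ ∈ T := by
    rcases exists_not_le_of_not_isChain hc with
      ⟨p, q, hp, hq, hpq⟩ | ⟨p, q, hp, hq, hpq⟩ | ⟨p, q, hp, hq, hq0, hpn⟩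
    · rcases hbaa i p q hi hp hq with e | e | e | e
      · exact absurd e hpq
      · exact absurd e hi0
      · obtain rfl : p = ⟨n - 1, Nat.sub_lt hn Nat.one_pos⟩ := Fin.ext e
        exact ⟨q, hq, fun e' => hpq (Fin.ext e'.symm), hp⟩
      · obtain rfl : q = ⟨n - 1, Nat.sub_lt hn Nat.one_pos⟩ := Fin.ext e
        exact ⟨p, hp, fun e' => hpq (Fin.ext e'), hq⟩
    · exact absurd (hbbb i p q hi hp hq) hpq
    · exact absurd (hbab i p q hi hp hq) (by simp [hq0, hpn, hi0])
  have ha : ∀ j, a j ∈ T ↔ (j : ℕ) = n - 1 ∨ j = k := by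
    refine fun j => ⟨fun hj => ?_, ?_⟩
    · have := hbaa i j k hi hj hk
      tauto
    · rintro (e | rfl)
      exacts [(Fin.ext e : j = ⟨n - 1, Nat.sub_lt hn Nat.one_pos⟩) ▸ hlink, hk]
  have hb : ∀ j, b j ∈ T → (j : ℕ) = 0 := fun j hj => by
    have := hbab i k j hi hk hj
    tauto
  have hSa : ∀ j, a j ∉ S := fun j hj => hkn (congrArg Fin.val (haaa j _ _ hj hlink hk)).symm
  have hSb : ∀ j, b j ∉ T → b j ∈ S := fun j hj =>
    h.b_mem_left hj (fun p q => hbbb i p q hi) (fun p q _ hq => .inl (hb q hq))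
      (fun p q hp hq => by have := hbaa i p q hi hp hq; tauto)
  have hdisj : ∀ j, b j ∈ S → b j ∉ T := fun j => h.notMem_right
  have hkne : a k ≠ aLink n hn := fun e => hkn (a_eq_aLink_iff.1 e)
  by_cases hl : bLink n hn ∈ T
  · refine .inr (.inl ⟨k, hkne, ?_, ?_⟩)
    · ext (_ | _ | j | j) <;> simp [bLevel, bLink, Fin.ext_iff] at hl ⊢ <;> grind
    · ext (_ | _ | j | j) <;> simp [aLink, bLink, Fin.ext_iff] at hl ⊢ <;> grind
  · refine .inl (.inl ⟨k, hkne, ?_, ?_⟩)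
    · ext (_ | _ | j | j) <;> simp [bLevel, bLink] at hl ⊢ <;> grind
    · ext (_ | _ | j | j) <;> simp [aLink, bLink, Fin.ext_iff] at hl ⊢ <;> grind

theorem typeS2Links (h : MaximalSTPair n S T) (hn : 0 < n) (hc : ¬ IsChain (· ≤ ·) T)
    (hS : S = {aLink n hn, bLink n hn}) : TypeS2Links n hn S T := by
  obtain ⟨haaa, hbbb, -⟩ := h.index_conditions
  have hT0 := bot_notMem_of_subset_star h.subset_star_right
  have hT1 := top_notMem_of_subset_star h.subset_star_right
  have haS : aLink n hn ∈ S := by simp [hS]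
  have hbS : bLink n hn ∈ S := by simp [hS]
  rcases exists_not_le_of_not_isChain hc with
    ⟨p, q, hp, hq, hpq⟩ | ⟨p, q, hp, hq, hpq⟩ | ⟨p, q, hp, hq, hq0, hpn⟩
  · exact absurd (haaa _ p q haS hp hq) hpq
  · exact absurd (hbbb _ p q hbS hp hq) hpq
  · refine ⟨p, q, fun e => hpn (a_eq_aLink_iff.1 e), fun e => hq0 (b_eq_bLink_iff.1 e), hS, ?_⟩
    have ha := fun j (hj : a j ∈ T) => haaa _ j p haS hj hp
    have hb := fun j (hj : b j ∈ T) => hbbb _ j q hbS hj hq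
    ext (_ | _ | j | j) <;> simp <;> grind

theorem typeSLink_of_left_eq_aLink (h : MaximalSTPair n S T) (hn : 1 < n)
    (hS : S = {aLink n (by omega)}) : TypeSLink n (by omega) S T := by
  obtain ⟨haaa, -⟩ := h.index_conditions
  have hT0 := bot_notMem_of_subset_star h.subset_star_right
  have hT1 := top_notMem_of_subset_star h.subset_star_right
  have haS : aLink n (by omega) ∈ S := by simp [hS]
  have hlink : ∀ j, a j ∈ T → (j : ℕ) ≠ n - 1 := fun j hj e =>
    h.notMem_right haS ((a_eq_aLink_iff (h := by omega)).2 e ▸ hj)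
  have hb : ∀ j, b j ∈ T := fun j => by
    refine h.mem_right (b_mem_star j) (by simp [hS, aLink]) ?_
    rintro s hs (_ | _ | k | k) hk
    all_goals obtain rfl : s = aLink n (by omega) := by simpa [hS] using hs
    case a => exact ((distribAt_a_a_b fun e => hlink k hk (congrArg Fin.val e).symm).2 (.inr (.inr rfl))).symm
    case b => exact distribAt_a_b_b.2 (.inr (.inl rfl))
    all_goals contradiction
  obtain ⟨i, hi⟩ : ∃ i, a i ∈ T := by
    by_contra! hA
    refine hA ⟨0, by omega⟩ (h.mem_right (a_mem_star _) ?_ ?_)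
    · simp [hS, aLink]
      omega
    rintro s hs (_ | _ | k | k) hk
    all_goals obtain rfl : s = aLink n (by omega) := by simpa [hS] using hs
    case b =>
      refine (distribAt_a_a_b fun e => ?_).2 (.inr (.inr rfl))
      have := congrArg Fin.val e
      simp at this
      omega
    all_goals grind
  refine .inr ⟨i, fun e => hlink i hi (a_eq_aLink_iff.1 e), hS, ?_⟩
  have ha := fun j (hj : a j ∈ T) => haaa _ j i haS hj hi
  ext (_ | _ | j | j) <;> simp [bLevel] <;> grind

theorem typeSLink_of_left_eq_bLink (h : MaximalSTPair n S T) (hn : 1 < n)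
    (hS : S = {bLink n (by omega)}) : TypeSLink n (by omega) S T := by
  obtain ⟨-, hbbb, -⟩ := h.index_conditions
  have hT0 := bot_notMem_of_subset_star h.subset_star_right
  have hT1 := top_notMem_of_subset_star h.subset_star_right
  have hbS : bLink n (by omega) ∈ S := by simp [hS]
  have hlink : ∀ j, b j ∈ T → (j : ℕ) ≠ 0 := fun j hj e =>
    h.notMem_right hbS ((b_eq_bLink_iff (h := by omega)).2 e ▸ hj)
  have ha : ∀ j, a j ∈ T := fun j => by
    refine h.mem_right (a_mem_star j) (by simp [hS, bLink]) ?_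
    rintro s hs (_ | _ | k | k) hk
    all_goals obtain rfl : s = bLink n (by omega) := by simpa [hS] using hs
    case a => exact distribAt_b_a_a.2 (.inr (.inl rfl))
    case b => exact (distribAt_b_a_b fun e => hlink k hk (congrArg Fin.val e).symm).2 (.inr (.inr rfl))
    all_goals contradiction
  obtain ⟨i, hi⟩ : ∃ i, b i ∈ T := by
    by_contra! hB
    refine hB ⟨1, hn⟩ (h.mem_right (b_mem_star _) (by simp [hS, bLink]) ?_)
    rintro s hs (_ | _ | k | k) hk
    all_goals obtain rfl : s = bLink n (by omega) := by simpa [hS] using hs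
    case a => exact ((distribAt_b_a_b (by simp)).2 (.inr (.inr rfl))).symm
    all_goals grind
  refine .inl ⟨i, fun e => hlink i hi (b_eq_bLink_iff.1 e), hS, ?_⟩
  have hb := fun j (hj : b j ∈ T) => hbbb _ j i hbS hj hi
  ext (_ | _ | j | j) <;> simp [aLevel] <;> grind

end MaximalSTPair

/-- Characterization of maximal `ST`-pairs of `M_{n,n}`: every maximal
`ST`-pair has one of the five forms T-chain, S-link, S-2-links, S-level,
S-level-minus-link. -/
theorem characterization_of_maximal_ST_pairs (n : ℕ) (hn : 3 ≤ n)
    (S T : Set (Mnn n)) (h : MaximalSTPair n S T) :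
    TypeTChain n (by omega) S T ∨ TypeSLink n (by omega) S T ∨
    TypeS2Links n (by omega) S T ∨ TypeSLevel n (by omega) S T ∨
    TypeSLevelMinusLink n (by omega) S T := by
  have hn0 : 0 < n := by omega
  by_cases hc : IsChain (· ≤ ·) T
  · exact .inl (h.typeTChain hn0 hc)
  refine .inr ?_
  by_cases ha : ∃ i, Mnn.a i ∈ S ∧ (i : ℕ) ≠ n - 1
  · obtain ⟨i, hi, hin⟩ := ha
    exact .inr (.inr (h.of_a_mem_left hn0 hc hi hin))
  by_cases hb : ∃ i, Mnn.b i ∈ S ∧ (i : ℕ) ≠ 0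
  · obtain ⟨i, hi, hi0⟩ := hb
    exact .inr (.inr (h.of_b_mem_left hn0 hc hi hi0))
  push Not at ha hb
  have hsub : S ⊆ {Mnn.aLink n hn0, Mnn.bLink n hn0} := by
    rintro (_ | _ | i | i) hi
    case a => exact .inl (Mnn.a_eq_aLink_iff.2 (ha i hi))
    case b => exact .inr (Mnn.b_eq_bLink_iff.2 (hb i hi))
    · exact absurd rfl (h.subset_star_left hi).1
    · exact absurd rfl (h.subset_star_left hi).2
  rcases Set.subset_pair_iff_eq.1 hsub with hS | hS | hS | hS
  · exact absurd hS h.nonempty_left.ne_empty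
  · exact .inl (h.typeSLink_of_left_eq_aLink (by omega) hS)
  · exact .inl (h.typeSLink_of_left_eq_bLink (by omega) hS)
  · exact .inr (.inl (h.typeS2Links hn0 hc hS))
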